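/- arXiv:2102.05289 — 5 statements merged into one kernel-verified Lean document; each statement's English description precedes it below -/
import Mathlib

section
/- Consider a K-layer feedforward network f^w with C = n_K output classes and monotone nondecreasing activation h, an input x ∈ ℝ^{n_0}, a class y, and ε ≥ 0. Then σ_y(f_{LB}^{w,ε}(x)) ≤ σ_y(f_min^{w,ε}(x)); i.e., the softmax of the IBP corner vector is a certified lower bound on the worst-case softmax of class y over the ℓ∞ ε-ball around x. -/
/-- Activations of a feedforward network: `netPhi … x 0 = x` (the input `φ_(0)`) and
`netPhi … x (k+1) = h (W_k (netPhi … x k) + b_k)` (the activation `φ_(k+1)`).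
For a `K`-layer network only the values with `k ≤ K - 1` are used. -/
noncomputable def netPhi (n : ℕ → ℕ)
    (W : ∀ k : ℕ, Matrix (Fin (n (k + 1))) (Fin (n k)) ℝ)
    (b : ∀ k : ℕ, Fin (n (k + 1)) → ℝ) (h : ℝ → ℝ)
    (x : Fin (n 0) → ℝ) : (k : ℕ) → Fin (n k) → ℝ
  | 0 => x
  | (k + 1) => fun i => h (((W k).mulVec (netPhi n W b h x k) + b k) i)

/-- Pre-activations: `netPre … x k = W_k φ_(k) + b_k`, i.e. the pre-activation
`f_(k+1)` of the network.  The output of a `K`-layer network is `f^w(x) = netPre … x (K-1)`. -/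
noncomputable def netPre (n : ℕ → ℕ)
    (W : ∀ k : ℕ, Matrix (Fin (n (k + 1))) (Fin (n k)) ℝ)
    (b : ∀ k : ℕ, Fin (n (k + 1)) → ℝ) (h : ℝ → ℝ)
    (x : Fin (n 0) → ℝ) (k : ℕ) : Fin (n (k + 1)) → ℝ :=
  (W k).mulVec (netPhi n W b h x k) + b k

/-- Interval bound propagation on the activations: `ibpPhi … x ε k = (φ_(k)^L, φ_(k)^U)`.
At `k = 0` the bounds are `x ∓ ε·𝟙`; at `k+1` they are `h (μ_{k+1} ∓ r_{k+1})` with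
`μ_{k+1} = W_k (φ_(k)^U + φ_(k)^L)/2 + b_k` and `r_{k+1} = |W_k| (φ_(k)^U − φ_(k)^L)/2`. -/
noncomputable def ibpPhi (n : ℕ → ℕ)
    (W : ∀ k : ℕ, Matrix (Fin (n (k + 1))) (Fin (n k)) ℝ)
    (b : ∀ k : ℕ, Fin (n (k + 1)) → ℝ) (h : ℝ → ℝ)
    (x : Fin (n 0) → ℝ) (ε : ℝ) : (k : ℕ) → (Fin (n k) → ℝ) × (Fin (n k) → ℝ)
  | 0 => (fun i => x i - ε, fun i => x i + ε)
  | (k + 1) =>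
      let L := (ibpPhi n W b h x ε k).1
      let U := (ibpPhi n W b h x ε k).2
      let μ := (W k).mulVec (fun i => (U i + L i) / 2) + b k
      let r := (Matrix.of fun i j => |W k i j|).mulVec (fun i => (U i - L i) / 2)
      (fun i => h (μ i - r i), fun i => h (μ i + r i))

/-- Interval bound propagation on the pre-activations:
`ibpPre … x ε k = (f_(k+1)^L, f_(k+1)^U) = (μ_{k+1} − r_{k+1}, μ_{k+1} + r_{k+1})`.
The IBP output bounds of a `K`-layer network are `(f^{w,L,ε}, f^{w,U,ε}) = ibpPre … x ε (K-1)`. -/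
noncomputable def ibpPre (n : ℕ → ℕ)
    (W : ∀ k : ℕ, Matrix (Fin (n (k + 1))) (Fin (n k)) ℝ)
    (b : ∀ k : ℕ, Fin (n (k + 1)) → ℝ) (h : ℝ → ℝ)
    (x : Fin (n 0) → ℝ) (ε : ℝ) (k : ℕ) : (Fin (n (k + 1)) → ℝ) × (Fin (n (k + 1)) → ℝ) :=
  let L := (ibpPhi n W b h x ε k).1
  let U := (ibpPhi n W b h x ε k).2
  let μ := (W k).mulVec (fun i => (U i + L i) / 2) + b k
  let r := (Matrix.of fun i j => |W k i j|).mulVec (fun i => (U i - L i) / 2)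
  (fun i => μ i - r i, fun i => μ i + r i)

/-- Softmax probability of class `y` for logits `z ∈ ℝ^C`. -/
noncomputable def softmax {C : ℕ} (y : Fin C) (z : Fin C → ℝ) : ℝ :=
  Real.exp (z y) / ∑ j, Real.exp (z j)

/-- Worst-case softmax of class `y` on the `ℓ∞` ε-ball around `x`:
`σ_y(f_min^{w,ε}(x)) = inf { σ_y(f x') : ‖x − x'‖_∞ ≤ ε }`.
(The norm on `Fin d → ℝ` is the sup norm.) -/
noncomputable def minSoftmax {d C : ℕ} (f : (Fin d → ℝ) → Fin C → ℝ)
    (x : Fin d → ℝ) (y : Fin C) (ε : ℝ) : ℝ :=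
  sInf {p : ℝ | ∃ x' : Fin d → ℝ, ‖x - x'‖ ≤ ε ∧ p = softmax y (f x')}

/-- The corner vector `f_LB` with `(f_LB) y = L y` and `(f_LB) j = U j` for `j ≠ y`. -/
def cornerLB {C : ℕ} (y : Fin C) (L U : Fin C → ℝ) : Fin C → ℝ :=
  fun j => if j = y then L j else U j

theorem affine_bound {m p : ℕ} (A : Matrix (Fin m) (Fin p) ℝ) (c : Fin m → ℝ)
    (L U v : Fin p → ℝ) (hv : ∀ i, L i ≤ v i ∧ v i ≤ U i) (i : Fin m) :
    (A.mulVec (fun i => (U i + L i) / 2) + c) i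
        - ((Matrix.of fun i j => |A i j|).mulVec (fun i => (U i - L i) / 2)) i
      ≤ (A.mulVec v + c) i ∧
    (A.mulVec v + c) i ≤ (A.mulVec (fun i => (U i + L i) / 2) + c) i
        + ((Matrix.of fun i j => |A i j|).mulVec (fun i => (U i - L i) / 2)) i := by
  have key : |∑ j, A i j * v j - ∑ j, A i j * ((U j + L j) / 2)|
      ≤ ∑ j, |A i j| * ((U j - L j) / 2) := by
    rw [← Finset.sum_sub_distrib]
    refine (Finset.abs_sum_le_sum_abs _ _).trans (Finset.sum_le_sum fun j _ => ?_)
    rw [← mul_sub, abs_mul]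
    refine mul_le_mul_of_nonneg_left ?_ (abs_nonneg _)
    rw [abs_le]
    constructor <;> linarith [(hv j).1, (hv j).2]
  rw [abs_le] at key
  simp only [Pi.add_apply, Matrix.mulVec, dotProduct, Matrix.of_apply]
  constructor <;> linarith [key.1, key.2]

theorem ibpPhi_bound (n : ℕ → ℕ)
    (W : ∀ k : ℕ, Matrix (Fin (n (k + 1))) (Fin (n k)) ℝ)
    (b : ∀ k : ℕ, Fin (n (k + 1)) → ℝ) (h : ℝ → ℝ) (hmono : Monotone h)
    (x x' : Fin (n 0) → ℝ) (ε : ℝ) (hx : ‖x - x'‖ ≤ ε) (k : ℕ) :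
    ∀ i, (ibpPhi n W b h x ε k).1 i ≤ netPhi n W b h x' k i ∧
      netPhi n W b h x' k i ≤ (ibpPhi n W b h x ε k).2 i := by
  induction k with
  | zero =>
    intro i
    have h1 := (norm_le_pi_norm (x - x') i).trans hx
    rw [Real.norm_eq_abs, abs_le, Pi.sub_apply] at h1
    simp only [ibpPhi, netPhi]
    constructor <;> linarith [h1.1, h1.2]
  | succ k ih =>
    intro i
    have h2 := affine_bound (W k) (b k) _ _ _ ih i
    simp only [ibpPhi, netPhi]
    exact ⟨hmono h2.1, hmono h2.2⟩

theorem softmax_corner_le {C : ℕ} (y : Fin C) (L U z : Fin C → ℝ)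
    (hz : ∀ i, L i ≤ z i ∧ z i ≤ U i) : softmax y (cornerLB y L U) ≤ softmax y z := by
  have pos : ∀ w : Fin C → ℝ, 0 < ∑ j, Real.exp (w j) := fun w =>
    Finset.sum_pos (fun j _ => Real.exp_pos _) ⟨y, Finset.mem_univ _⟩
  unfold softmax
  rw [div_le_div_iff₀ (pos _) (pos _), Finset.mul_sum, Finset.mul_sum]
  refine Finset.sum_le_sum fun j _ => ?_
  rw [← Real.exp_add, ← Real.exp_add, Real.exp_le_exp]
  unfold cornerLB
  by_cases hj : j = y
  · subst hj
    simp only [if_true]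
    linarith
  · simp only [if_true, if_neg hj]
    linarith [(hz y).1, (hz j).2]

/-- the softmax of the IBP corner vector is a certified lower bound on the
worst-case softmax of class `y` over the `ℓ∞` ε-ball around `x`:
`σ_y(f_LB^{w,ε}(x)) ≤ σ_y(f_min^{w,ε}(x))`, for a `K`-layer network (`K ≥ 1`) with
monotone nondecreasing activation and `C = n K` output classes. -/
theorem ibp_cornerLB_le_minSoftmax (n : ℕ → ℕ)
    (W : ∀ k : ℕ, Matrix (Fin (n (k + 1))) (Fin (n k)) ℝ)
    (b : ∀ k : ℕ, Fin (n (k + 1)) → ℝ) (h : ℝ → ℝ) (hmono : Monotone h)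
    (K : ℕ) (hK : 1 ≤ K) (x : Fin (n 0) → ℝ) (y : Fin (n (K - 1 + 1)))
    (ε : ℝ) (hε : 0 ≤ ε) :
    softmax y (cornerLB y (ibpPre n W b h x ε (K - 1)).1 (ibpPre n W b h x ε (K - 1)).2) ≤
      minSoftmax (fun x' => netPre n W b h x' (K - 1)) x y ε := by
  unfold minSoftmax
  refine le_csInf ⟨_, x, by simpa using hε, rfl⟩ ?_
  rintro p ⟨x', hx', rfl⟩
  exact softmax_corner_le y _ _ _ fun i =>
    affine_bound (W (K - 1)) (b (K - 1)) _ _ _ (ibpPhi_bound n W b h hmono x x' ε hx' (K - 1)) i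
end

section
/- Consider a K-layer feedforward network f^w with C = n_K output classes and monotone nondecreasing activation h, an input x ∈ ℝ^{n_0}, a class c', and ε ≥ 0. Then for every x' with ‖x − x'‖_∞ ≤ ε, σ_{c'}(f^w(x')) ≤ σ_{c'}(f_{UB}^{w,ε,c'}(x)); i.e., the softmax of the IBP corner vector is a certified upper bound on the softmax of class c' over the ℓ∞ ε-ball around x. -/
/-- The corner vector `f_UB` with `(f_UB) c' = U c'` and `(f_UB) j = L j` for `j ≠ c'`. -/
def cornerUB {C : ℕ} (c' : Fin C) (L U : Fin C → ℝ) : Fin C → ℝ :=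
  fun j => if j = c' then U j else L j

lemma affine_bound_aux {m p : ℕ} (A : Matrix (Fin m) (Fin p) ℝ) (c : Fin m → ℝ)
    (L U v : Fin p → ℝ) (hL : ∀ i, L i ≤ v i) (hU : ∀ i, v i ≤ U i) (i : Fin m) :
    (A.mulVec (fun i => (U i + L i) / 2) + c) i
        - (Matrix.of fun i j => |A i j|).mulVec (fun i => (U i - L i) / 2) i
      ≤ (A.mulVec v + c) i ∧
    (A.mulVec v + c) i ≤ (A.mulVec (fun i => (U i + L i) / 2) + c) i
        + (Matrix.of fun i j => |A i j|).mulVec (fun i => (U i - L i) / 2) i := by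
  have key : |∑ j, A i j * (v j - (U j + L j) / 2)| ≤ ∑ j, |A i j| * ((U j - L j) / 2) := by
    refine (Finset.abs_sum_le_sum_abs _ _).trans (Finset.sum_le_sum fun j _ => ?_)
    rw [abs_mul]
    refine mul_le_mul_of_nonneg_left ?_ (abs_nonneg _)
    rw [abs_le]
    constructor <;> linarith [hL j, hU j]
  simp only [mul_sub, Finset.sum_sub_distrib] at key
  simp only [Matrix.mulVec, dotProduct, Pi.add_apply, Matrix.of_apply]
  rw [abs_le] at key
  constructor <;> linarith [key.1, key.2]

lemma ibpPhi_bound_aux (n : ℕ → ℕ)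
    (W : ∀ k : ℕ, Matrix (Fin (n (k + 1))) (Fin (n k)) ℝ)
    (b : ∀ k : ℕ, Fin (n (k + 1)) → ℝ) (h : ℝ → ℝ) (hmono : Monotone h)
    (x x' : Fin (n 0) → ℝ) (ε : ℝ) (hx : ∀ i, |x i - x' i| ≤ ε) (k : ℕ) :
    (∀ i, (ibpPhi n W b h x ε k).1 i ≤ netPhi n W b h x' k i) ∧
    (∀ i, netPhi n W b h x' k i ≤ (ibpPhi n W b h x ε k).2 i) := by
  induction k with
  | zero =>
    simp only [ibpPhi, netPhi]
    constructor <;> intro i <;> have := abs_le.1 (hx i) <;> linarith [this.1, this.2]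
  | succ k ih =>
    simp only [ibpPhi, netPhi]
    exact ⟨fun i => hmono (affine_bound_aux (W k) (b k) _ _ _ ih.1 ih.2 i).1,
      fun i => hmono (affine_bound_aux (W k) (b k) _ _ _ ih.1 ih.2 i).2⟩

lemma softmax_corner_aux {C : ℕ} (c : Fin C) (L U z : Fin C → ℝ)
    (hL : ∀ i, L i ≤ z i) (hU : ∀ i, z i ≤ U i) :
    softmax c z ≤ softmax c (cornerUB c L U) := by
  have pos : ∀ w : Fin C → ℝ, 0 < ∑ j, Real.exp (w j) := fun w =>
    Finset.sum_pos (fun j _ => Real.exp_pos _) ⟨c, Finset.mem_univ c⟩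
  unfold softmax
  rw [div_le_div_iff₀ (pos _) (pos _), Finset.mul_sum, Finset.mul_sum]
  refine Finset.sum_le_sum fun j _ => ?_
  rw [← Real.exp_add, ← Real.exp_add, Real.exp_le_exp]
  by_cases hj : j = c
  · subst hj
    exact (add_comm _ _).le
  · simp only [cornerUB, if_neg hj, if_true]
    linarith [hL j, hU c]

/-- the softmax of the IBP corner vector is a certified upper bound on the
softmax of class `c'` over the `ℓ∞` ε-ball around `x`: for every `x'` with
`‖x − x'‖_∞ ≤ ε`, `σ_{c'}(f^w(x')) ≤ σ_{c'}(f_UB^{w,ε,c'}(x))`, for a `K`-layer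
network (`K ≥ 1`) with monotone nondecreasing activation and `C = n K` output classes. -/
theorem ibp_cornerUB_ge_softmax (n : ℕ → ℕ)
    (W : ∀ k : ℕ, Matrix (Fin (n (k + 1))) (Fin (n k)) ℝ)
    (b : ∀ k : ℕ, Fin (n (k + 1)) → ℝ) (h : ℝ → ℝ) (hmono : Monotone h)
    (K : ℕ) (hK : 1 ≤ K) (x : Fin (n 0) → ℝ) (c' : Fin (n (K - 1 + 1)))
    (ε : ℝ) (hε : 0 ≤ ε) :
    ∀ x' : Fin (n 0) → ℝ, ‖x - x'‖ ≤ ε →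
      softmax c' (netPre n W b h x' (K - 1)) ≤
        softmax c' (cornerUB c' (ibpPre n W b h x ε (K - 1)).1
          (ibpPre n W b h x ε (K - 1)).2) := by
  intro x' hx'
  have hx : ∀ i, |x i - x' i| ≤ ε := fun i => by
    have := (norm_le_pi_norm (x - x') i).trans hx'
    simpa [Real.norm_eq_abs] using this
  have hb := ibpPhi_bound_aux n W b h hmono x x' ε hx (K - 1)
  exact softmax_corner_aux c' _ _ _
    (fun i => (affine_bound_aux (W (K - 1)) (b (K - 1)) _ _ _ hb.1 hb.2 i).1)
    (fun i => (affine_bound_aux (W (K - 1)) (b (K - 1)) _ _ _ hb.1 hb.2 i).2)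
end

section
/- Proposition 1: Let f^w be a K-layer feedforward network with C = n_K output classes and monotone nondecreasing activation h, let x ∈ ℝ^{n_0} be an input, y a class, and p_ε a probability measure on [0,∞). Then both ε ↦ σ_y(f_min^{w,ε}(x)) and ε ↦ σ_y(f_{LB}^{w,ε}(x)) are antitone, [0,1]-valued functions on [0,∞), and the robust likelihood is lower bounded by its IBP approximation: p(y|x,w) = ∫ σ_y(f_min^{w,ε}(x)) dp_ε(ε) ≥ ∫ σ_y(f_{LB}^{w,ε}(x)) dp_ε(ε) =: p_IBP(y|x,w). -/
open MeasureTheory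

lemma ibp_affine {m d : ℕ} (W : Matrix (Fin m) (Fin d) ℝ) (L1 U1 L2 U2 : Fin d → ℝ)
    (hL : ∀ i, L2 i ≤ L1 i) (hU : ∀ i, U1 i ≤ U2 i) (i : Fin m) :
    W.mulVec (fun i => (U2 i + L2 i) / 2) i
        - (Matrix.of fun i j => |W i j|).mulVec (fun i => (U2 i - L2 i) / 2) i
      ≤ W.mulVec (fun i => (U1 i + L1 i) / 2) i
        - (Matrix.of fun i j => |W i j|).mulVec (fun i => (U1 i - L1 i) / 2) i ∧
    W.mulVec (fun i => (U1 i + L1 i) / 2) i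
        + (Matrix.of fun i j => |W i j|).mulVec (fun i => (U1 i - L1 i) / 2) i
      ≤ W.mulVec (fun i => (U2 i + L2 i) / 2) i
        + (Matrix.of fun i j => |W i j|).mulVec (fun i => (U2 i - L2 i) / 2) i := by
  simp only [Matrix.mulVec, dotProduct, Matrix.of_apply, ← Finset.sum_sub_distrib,
    ← Finset.sum_add_distrib]
  constructor <;> refine Finset.sum_le_sum fun j _ => ?_ <;>
    have p1 := mul_le_mul_of_nonneg_left (hL j) (abs_nonneg (W i j)) <;>
    have p2 := mul_le_mul_of_nonneg_left (hU j) (abs_nonneg (W i j)) <;>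
    rcases abs_cases (W i j) with ⟨h1, h2⟩ | ⟨h1, h2⟩ <;> rw [h1] at p1 p2 ⊢ <;>
    linarith

lemma ibpPhi_mono (n : ℕ → ℕ)
    (W : ∀ k : ℕ, Matrix (Fin (n (k + 1))) (Fin (n k)) ℝ)
    (b : ∀ k : ℕ, Fin (n (k + 1)) → ℝ) (h : ℝ → ℝ) (hmono : Monotone h)
    (x : Fin (n 0) → ℝ) (e1 e2 : ℝ) (he : e1 ≤ e2) (k : ℕ) :
    (∀ i, (ibpPhi n W b h x e2 k).1 i ≤ (ibpPhi n W b h x e1 k).1 i) ∧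
    (∀ i, (ibpPhi n W b h x e1 k).2 i ≤ (ibpPhi n W b h x e2 k).2 i) := by
  induction k with
  | zero => exact ⟨fun i => by simp only [ibpPhi]; linarith, fun i => by simp [ibpPhi, he]⟩
  | succ k ih =>
    have := ibp_affine (W k) _ _ _ _ ih.1 ih.2
    refine ⟨fun i => ?_, fun i => ?_⟩
    · simp only [ibpPhi, Pi.add_apply]
      exact hmono (by linarith [(this i).1])
    · simp only [ibpPhi, Pi.add_apply]
      exact hmono (by linarith [(this i).2])

lemma ibpPre_mono (n : ℕ → ℕ)
    (W : ∀ k : ℕ, Matrix (Fin (n (k + 1))) (Fin (n k)) ℝ)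
    (b : ∀ k : ℕ, Fin (n (k + 1)) → ℝ) (h : ℝ → ℝ) (hmono : Monotone h)
    (x : Fin (n 0) → ℝ) (e1 e2 : ℝ) (he : e1 ≤ e2) (k : ℕ) :
    (∀ i, (ibpPre n W b h x e2 k).1 i ≤ (ibpPre n W b h x e1 k).1 i) ∧
    (∀ i, (ibpPre n W b h x e1 k).2 i ≤ (ibpPre n W b h x e2 k).2 i) := by
  have ih := ibpPhi_mono n W b h hmono x e1 e2 he k
  have := ibp_affine (W k) _ _ _ _ ih.1 ih.2
  refine ⟨fun i => ?_, fun i => ?_⟩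
  · simp only [ibpPre, Pi.add_apply]
    linarith [(this i).1]
  · simp only [ibpPre, Pi.add_apply]
    linarith [(this i).2]

lemma ibp_affine_pt {m d : ℕ} (W : Matrix (Fin m) (Fin d) ℝ) (v L2 U2 : Fin d → ℝ)
    (hL : ∀ i, L2 i ≤ v i) (hU : ∀ i, v i ≤ U2 i) (i : Fin m) :
    W.mulVec (fun i => (U2 i + L2 i) / 2) i
        - (Matrix.of fun i j => |W i j|).mulVec (fun i => (U2 i - L2 i) / 2) i
      ≤ W.mulVec v i ∧
    W.mulVec v i
      ≤ W.mulVec (fun i => (U2 i + L2 i) / 2) i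
        + (Matrix.of fun i j => |W i j|).mulVec (fun i => (U2 i - L2 i) / 2) i := by
  have := ibp_affine W v v L2 U2 hL hU i
  have e1 : (fun i => (v i + v i) / 2) = v := by ext; ring
  have e2 : (fun i => (v i - v i) / 2) = 0 := by ext; simp
  rw [e1, e2] at this
  simpa using this

lemma ibpPhi_sound (n : ℕ → ℕ)
    (W : ∀ k : ℕ, Matrix (Fin (n (k + 1))) (Fin (n k)) ℝ)
    (b : ∀ k : ℕ, Fin (n (k + 1)) → ℝ) (h : ℝ → ℝ) (hmono : Monotone h)
    (x x' : Fin (n 0) → ℝ) (e : ℝ) (he : ‖x - x'‖ ≤ e) (k : ℕ) :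
    (∀ i, (ibpPhi n W b h x e k).1 i ≤ netPhi n W b h x' k i) ∧
    (∀ i, netPhi n W b h x' k i ≤ (ibpPhi n W b h x e k).2 i) := by
  induction k with
  | zero =>
    have key : ∀ i, |x i - x' i| ≤ e := fun i => (norm_le_pi_norm (x - x') i).trans he
    refine ⟨fun i => ?_, fun i => ?_⟩ <;> simp only [ibpPhi, netPhi] <;>
      linarith [abs_le.1 (key i)]
  | succ k ih =>
    have := ibp_affine_pt (W k) _ _ _ ih.1 ih.2
    refine ⟨fun i => ?_, fun i => ?_⟩
    · simp only [ibpPhi, netPhi, Pi.add_apply]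
      exact hmono (by linarith [(this i).1])
    · simp only [ibpPhi, netPhi, Pi.add_apply]
      exact hmono (by linarith [(this i).2])

lemma ibpPre_sound (n : ℕ → ℕ)
    (W : ∀ k : ℕ, Matrix (Fin (n (k + 1))) (Fin (n k)) ℝ)
    (b : ∀ k : ℕ, Fin (n (k + 1)) → ℝ) (h : ℝ → ℝ) (hmono : Monotone h)
    (x x' : Fin (n 0) → ℝ) (e : ℝ) (he : ‖x - x'‖ ≤ e) (k : ℕ) :
    (∀ i, (ibpPre n W b h x e k).1 i ≤ netPre n W b h x' k i) ∧
    (∀ i, netPre n W b h x' k i ≤ (ibpPre n W b h x e k).2 i) := by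
  have ih := ibpPhi_sound n W b h hmono x x' e he k
  have := ibp_affine_pt (W k) _ _ _ ih.1 ih.2
  refine ⟨fun i => ?_, fun i => ?_⟩
  · simp only [ibpPre, netPre, Pi.add_apply]
    linarith [(this i).1]
  · simp only [ibpPre, netPre, Pi.add_apply]
    linarith [(this i).2]

lemma softmax_mem {C : ℕ} (y : Fin C) (z : Fin C → ℝ) : softmax y z ∈ Set.Icc (0 : ℝ) 1 := by
  have h0 : Real.exp (z y) ≤ ∑ j, Real.exp (z j) :=
    Finset.single_le_sum (f := fun j => Real.exp (z j)) (fun j _ => (Real.exp_pos _).le)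
      (Finset.mem_univ y)
  have h1 := Real.exp_pos (z y)
  exact ⟨div_nonneg h1.le (h1.le.trans h0), div_le_one_of_le₀ h0 (h1.le.trans h0)⟩

lemma softmax_le {C : ℕ} (y : Fin C) (z w : Fin C → ℝ) (hy : z y ≤ w y)
    (hj : ∀ j, j ≠ y → w j ≤ z j) : softmax y z ≤ softmax y w := by
  have key : ∀ z : Fin C → ℝ, softmax y z = (∑ j, Real.exp (z j - z y))⁻¹ := fun z => by
    simp only [softmax, Real.exp_sub, ← Finset.sum_div, inv_div]
  rw [key, key]
  have hpos : 0 < ∑ j, Real.exp (w j - w y) :=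
    Finset.sum_pos (fun j _ => Real.exp_pos _) ⟨y, Finset.mem_univ y⟩
  refine inv_anti₀ hpos (Finset.sum_le_sum fun j _ => Real.exp_le_exp.2 ?_)
  by_cases hjy : j = y
  · subst hjy; simp
  · linarith [hj j hjy]

/-- Proposition 1: For a `K`-layer network (`K ≥ 1`) with monotone
nondecreasing activation, input `x`, class `y`, and a probability measure `p_ε` on `ℝ`
concentrated on `[0,∞)`, both `ε ↦ σ_y(f_min^{w,ε}(x))` and `ε ↦ σ_y(f_LB^{w,ε}(x))`
are antitone `[0,1]`-valued functions on `[0,∞)`, and the robust likelihood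
`p(y|x,w) = ∫ σ_y(f_min^{w,ε}(x)) dp_ε` is lower bounded by its IBP approximation
`p_IBP(y|x,w) = ∫ σ_y(f_LB^{w,ε}(x)) dp_ε`. -/
theorem robust_likelihood_ibp_lower_bound (n : ℕ → ℕ)
    (W : ∀ k : ℕ, Matrix (Fin (n (k + 1))) (Fin (n k)) ℝ)
    (b : ∀ k : ℕ, Fin (n (k + 1)) → ℝ) (h : ℝ → ℝ) (hmono : Monotone h)
    (K : ℕ) (hK : 1 ≤ K) (x : Fin (n 0) → ℝ) (y : Fin (n (K - 1 + 1)))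
    (pε : Measure ℝ) [IsProbabilityMeasure pε] (hpε : pε (Set.Iio 0) = 0) :
    AntitoneOn (fun ε => minSoftmax (fun x' => netPre n W b h x' (K - 1)) x y ε)
      (Set.Ici (0 : ℝ)) ∧
    (∀ ε : ℝ, 0 ≤ ε →
      minSoftmax (fun x' => netPre n W b h x' (K - 1)) x y ε ∈ Set.Icc (0 : ℝ) 1) ∧
    AntitoneOn (fun ε =>
        softmax y (cornerLB y (ibpPre n W b h x ε (K - 1)).1 (ibpPre n W b h x ε (K - 1)).2))
      (Set.Ici (0 : ℝ)) ∧
    (∀ ε : ℝ, 0 ≤ ε →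
      softmax y (cornerLB y (ibpPre n W b h x ε (K - 1)).1 (ibpPre n W b h x ε (K - 1)).2)
        ∈ Set.Icc (0 : ℝ) 1) ∧
    (∫ ε, softmax y (cornerLB y (ibpPre n W b h x ε (K - 1)).1
          (ibpPre n W b h x ε (K - 1)).2) ∂pε) ≤
      ∫ ε, minSoftmax (fun x' => netPre n W b h x' (K - 1)) x y ε ∂pε := by
  have hbdd : ∀ ε : ℝ, BddBelow {p : ℝ | ∃ x' : Fin (n 0) → ℝ, ‖x - x'‖ ≤ ε ∧
      p = softmax y (netPre n W b h x' (K - 1))} := fun ε =>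
    ⟨0, by rintro p ⟨x', -, rfl⟩; exact (softmax_mem _ _).1⟩
  have hne : ∀ ε : ℝ, 0 ≤ ε → softmax y (netPre n W b h x (K - 1)) ∈
      {p : ℝ | ∃ x' : Fin (n 0) → ℝ, ‖x - x'‖ ≤ ε ∧
      p = softmax y (netPre n W b h x' (K - 1))} := fun ε hε => ⟨x, by simpa using hε, rfl⟩
  have A1 : AntitoneOn (fun ε => minSoftmax (fun x' => netPre n W b h x' (K - 1)) x y ε)
      (Set.Ici (0 : ℝ)) := by
    intro a ha c hc hac
    refine csInf_le_csInf (hbdd c) ⟨_, hne a ha⟩ ?_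
    rintro p ⟨x', hx', rfl⟩
    exact ⟨x', hx'.trans hac, rfl⟩
  have A2 : ∀ ε : ℝ, 0 ≤ ε →
      minSoftmax (fun x' => netPre n W b h x' (K - 1)) x y ε ∈ Set.Icc (0 : ℝ) 1 := by
    intro ε hε
    refine ⟨le_csInf ⟨_, hne ε hε⟩ ?_, (csInf_le (hbdd ε) (hne ε hε)).trans (softmax_mem _ _).2⟩
    rintro p ⟨x', -, rfl⟩
    exact (softmax_mem _ _).1
  have A3 : AntitoneOn (fun ε =>
        softmax y (cornerLB y (ibpPre n W b h x ε (K - 1)).1 (ibpPre n W b h x ε (K - 1)).2))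
      (Set.Ici (0 : ℝ)) := by
    intro a ha c hc hac
    have := ibpPre_mono n W b h hmono x a c hac (K - 1)
    refine softmax_le y _ _ ?_ fun j hj => ?_
    · simpa [cornerLB] using this.1 y
    · simpa [cornerLB, hj] using this.2 j
  refine ⟨A1, A2, A3, fun ε _ => softmax_mem _ _, ?_⟩
  have hae : ∀ᵐ ε ∂pε, ε ∈ Set.Ici (0 : ℝ) := by
    rw [ae_iff]
    convert hpε using 2
    ext; simp
  have hr : pε.restrict (Set.Ici 0) = pε := Measure.restrict_eq_self_of_ae_mem hae
  have I : ∀ g : ℝ → ℝ, AntitoneOn g (Set.Ici 0) → (∀ ε, 0 ≤ ε → g ε ∈ Set.Icc (0 : ℝ) 1) →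
      Integrable g pε := by
    intro g hg hg1
    have hm : AEMeasurable g pε := by
      have := aemeasurable_restrict_of_antitoneOn (μ := pε) measurableSet_Ici hg
      rwa [hr] at this
    refine Integrable.of_bound hm.aestronglyMeasurable 1 ?_
    filter_upwards [hae] with ε hε
    rw [Real.norm_of_nonneg (hg1 ε hε).1]
    exact (hg1 ε hε).2
  refine integral_mono_ae (I _ A3 fun ε _ => softmax_mem _ _) (I _ A1 A2) ?_
  filter_upwards [hae] with ε hε
  refine le_csInf ⟨_, hne ε hε⟩ ?_
  rintro p ⟨x', hx', rfl⟩
  have := ibpPre_sound n W b h hmono x x' ε hx' (K - 1)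
  refine softmax_le y _ _ ?_ fun j hj => ?_
  · simpa [cornerLB] using this.1 y
  · simpa [cornerLB, hj] using this.2 j
end

section
/- Let f^{w_1},…,f^{w_N} be K-layer feedforward networks of a common architecture with C = n_K output classes and monotone nondecreasing activation h, let x* ∈ ℝ^{n_0}, let y* be a class and ε ≥ 0. Then for every x̄ with ‖x* − x̄‖_∞ ≤ ε: Ê^{N,ε}_{y*,LB} ≤ Ê^N(x̄)_{y*}, and Ê^N(x̄)_c ≤ Ê^{N,ε}_{c,UB} for every class c ≠ y*. -/
/-- Empirical posterior predictor of `N` networks `f^{w_1},…,f^{w_N}` of the common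
`K`-layer architecture given by `(n, Ws i, bs i, h)`:
`Ê^N(x) c = (1/N) ∑ i σ_c(f^{w_i}(x))`. -/
noncomputable def ensemblePred (n : ℕ → ℕ) (N K : ℕ)
    (Ws : Fin N → ∀ k : ℕ, Matrix (Fin (n (k + 1))) (Fin (n k)) ℝ)
    (bs : Fin N → ∀ k : ℕ, Fin (n (k + 1)) → ℝ) (h : ℝ → ℝ)
    (x : Fin (n 0) → ℝ) (c : Fin (n (K - 1 + 1))) : ℝ :=
  (1 / (N : ℝ)) * ∑ i : Fin N, softmax c (netPre n (Ws i) (bs i) h x (K - 1))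

/-- IBP lower bound on the empirical predictor for class `y` at `x` and radius `ε`:
`Ê^{N,ε}_{y,LB} = (1/N) ∑ i σ_y(f_LB^{w_i,ε}(x))`. -/
noncomputable def ensembleLB (n : ℕ → ℕ) (N K : ℕ)
    (Ws : Fin N → ∀ k : ℕ, Matrix (Fin (n (k + 1))) (Fin (n k)) ℝ)
    (bs : Fin N → ∀ k : ℕ, Fin (n (k + 1)) → ℝ) (h : ℝ → ℝ)
    (x : Fin (n 0) → ℝ) (y : Fin (n (K - 1 + 1))) (ε : ℝ) : ℝ :=
  (1 / (N : ℝ)) * ∑ i : Fin N,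
    softmax y (cornerLB y (ibpPre n (Ws i) (bs i) h x ε (K - 1)).1
      (ibpPre n (Ws i) (bs i) h x ε (K - 1)).2)

/-- IBP upper bound on the empirical predictor for class `c'` at `x` and radius `ε`:
`Ê^{N,ε}_{c',UB} = (1/N) ∑ i σ_{c'}(f_UB^{w_i,ε,c'}(x))`. -/
noncomputable def ensembleUB (n : ℕ → ℕ) (N K : ℕ)
    (Ws : Fin N → ∀ k : ℕ, Matrix (Fin (n (k + 1))) (Fin (n k)) ℝ)
    (bs : Fin N → ∀ k : ℕ, Fin (n (k + 1)) → ℝ) (h : ℝ → ℝ)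
    (x : Fin (n 0) → ℝ) (c' : Fin (n (K - 1 + 1))) (ε : ℝ) : ℝ :=
  (1 / (N : ℝ)) * ∑ i : Fin N,
    softmax c' (cornerUB c' (ibpPre n (Ws i) (bs i) h x ε (K - 1)).1
      (ibpPre n (Ws i) (bs i) h x ε (K - 1)).2)

theorem softmax_le_aux {C : ℕ} (y : Fin C) (z z' : Fin C → ℝ) (h1 : z y ≤ z' y)
    (h2 : ∀ j, j ≠ y → z' j ≤ z j) : softmax y z ≤ softmax y z' := by
  unfold softmax
  have hp : ∀ w : Fin C → ℝ, 0 < ∑ j, Real.exp (w j) := fun w =>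
    Finset.sum_pos (fun j _ => Real.exp_pos _) ⟨y, Finset.mem_univ y⟩
  rw [div_le_div_iff₀ (hp z) (hp z'), Finset.mul_sum, Finset.mul_sum]
  refine Finset.sum_le_sum fun j _ => ?_
  rw [← Real.exp_add, ← Real.exp_add, Real.exp_le_exp]
  by_cases hj : j = y
  · subst hj; linarith
  · linarith [h2 j hj]

theorem affine_aux {m p : ℕ} (W : Matrix (Fin m) (Fin p) ℝ) (b : Fin m → ℝ)
    (L U v : Fin p → ℝ) (hL : ∀ i, L i ≤ v i) (hU : ∀ i, v i ≤ U i) (i : Fin m) :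
    (W.mulVec (fun i => (U i + L i) / 2) + b) i
        - (Matrix.of fun i j => |W i j|).mulVec (fun i => (U i - L i) / 2) i
      ≤ (W.mulVec v + b) i ∧
    (W.mulVec v + b) i ≤ (W.mulVec (fun i => (U i + L i) / 2) + b) i
        + (Matrix.of fun i j => |W i j|).mulVec (fun i => (U i - L i) / 2) i := by
  have key : |W.mulVec v i - W.mulVec (fun i => (U i + L i) / 2) i|
      ≤ (Matrix.of fun i j => |W i j|).mulVec (fun i => (U i - L i) / 2) i := by
    simp only [Matrix.mulVec, dotProduct, Matrix.of_apply]
    rw [← Finset.sum_sub_distrib]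
    refine (Finset.abs_sum_le_sum_abs _ _).trans (Finset.sum_le_sum fun j _ => ?_)
    rw [← mul_sub, abs_mul]
    refine mul_le_mul_of_nonneg_left ?_ (abs_nonneg _)
    rw [abs_le]
    constructor <;> linarith [hL j, hU j]
  have k := abs_le.mp key
  simp only [Pi.add_apply]
  constructor <;> linarith [k.1, k.2]

theorem phi_aux (n : ℕ → ℕ)
    (W : ∀ k : ℕ, Matrix (Fin (n (k + 1))) (Fin (n k)) ℝ)
    (b : ∀ k : ℕ, Fin (n (k + 1)) → ℝ) (h : ℝ → ℝ) (hmono : Monotone h)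
    (x xb : Fin (n 0) → ℝ) (ε : ℝ) (hx : ∀ i, |x i - xb i| ≤ ε) (k : ℕ) :
    ∀ i, (ibpPhi n W b h x ε k).1 i ≤ netPhi n W b h xb k i ∧
      netPhi n W b h xb k i ≤ (ibpPhi n W b h x ε k).2 i := by
  induction k with
  | zero =>
    intro i
    have := abs_le.mp (hx i)
    simp only [ibpPhi, netPhi]
    constructor <;> linarith [this.1, this.2]
  | succ k ih =>
    intro i
    have := affine_aux (W k) (b k) _ _ _ (fun i => (ih i).1) (fun i => (ih i).2) i
    simp only [ibpPhi, netPhi]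
    exact ⟨hmono this.1, hmono this.2⟩

theorem pre_aux (n : ℕ → ℕ)
    (W : ∀ k : ℕ, Matrix (Fin (n (k + 1))) (Fin (n k)) ℝ)
    (b : ∀ k : ℕ, Fin (n (k + 1)) → ℝ) (h : ℝ → ℝ) (hmono : Monotone h)
    (x xb : Fin (n 0) → ℝ) (ε : ℝ) (hx : ∀ i, |x i - xb i| ≤ ε) (k : ℕ) (i) :
    (ibpPre n W b h x ε k).1 i ≤ netPre n W b h xb k i ∧
      netPre n W b h xb k i ≤ (ibpPre n W b h x ε k).2 i := by
  have ih := phi_aux n W b h hmono x xb ε hx k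
  exact affine_aux (W k) (b k) _ _ _ (fun i => (ih i).1) (fun i => (ih i).2) i

/-- for `N` networks of a common `K`-layer architecture (`K ≥ 1`) with
monotone nondecreasing activation, a test point `x*`, class `y*` and `ε ≥ 0`, every
`x̄` with `‖x* − x̄‖_∞ ≤ ε` satisfies `Ê^{N,ε}_{y*,LB} ≤ Ê^N(x̄)_{y*}` and
`Ê^N(x̄)_c ≤ Ê^{N,ε}_{c,UB}` for every class `c ≠ y*`. -/
theorem ensemble_ibp_bounds (n : ℕ → ℕ) (N K : ℕ) (hK : 1 ≤ K)
    (Ws : Fin N → ∀ k : ℕ, Matrix (Fin (n (k + 1))) (Fin (n k)) ℝ)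
    (bs : Fin N → ∀ k : ℕ, Fin (n (k + 1)) → ℝ) (h : ℝ → ℝ) (hmono : Monotone h)
    (xstar : Fin (n 0) → ℝ) (ystar : Fin (n (K - 1 + 1))) (ε : ℝ) (hε : 0 ≤ ε)
    (xbar : Fin (n 0) → ℝ) (hxbar : ‖xstar - xbar‖ ≤ ε) :
    ensembleLB n N K Ws bs h xstar ystar ε ≤ ensemblePred n N K Ws bs h xbar ystar ∧
    ∀ c : Fin (n (K - 1 + 1)), c ≠ ystar →
      ensemblePred n N K Ws bs h xbar c ≤ ensembleUB n N K Ws bs h xstar c ε := by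
  have hx : ∀ i, |xstar i - xbar i| ≤ ε := fun i =>
    (norm_le_pi_norm (xstar - xbar) i).trans hxbar
  have hN : (0 : ℝ) ≤ 1 / (N : ℝ) := by positivity
  refine ⟨mul_le_mul_of_nonneg_left (Finset.sum_le_sum fun i _ => ?_) hN, fun c _ =>
    mul_le_mul_of_nonneg_left (Finset.sum_le_sum fun i _ => ?_) hN⟩
  · have hp := pre_aux n (Ws i) (bs i) h hmono xstar xbar ε hx (K - 1)
    refine softmax_le_aux _ _ _ ?_ fun j hj => ?_
    · simpa [cornerLB] using (hp ystar).1
    · simpa [cornerLB, hj] using (hp j).2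
  · have hp := pre_aux n (Ws i) (bs i) h hmono xstar xbar ε hx (K - 1)
    refine softmax_le_aux _ _ _ ?_ fun j hj => ?_
    · simpa [cornerUB] using (hp c).2
    · simpa [cornerUB, hj] using (hp j).1
end

section
/- Theorem 1 (pointwise certification): Let f^{w_1},…,f^{w_N} be K-layer feedforward networks of a common architecture with C = n_K output classes and monotone nondecreasing activation h, let x* ∈ ℝ^{n_0}, let y* be a class and ε ≥ 0. If Ê^{N,ε}_{y*,LB} > Ê^{N,ε}_{c,UB} for every class c ≠ y* (i.e., the class y* is the unique maximizer of the IBP worst-case predictor at x*), then for every x̄ with ‖x* − x̄‖_∞ ≤ ε we have Ê^N(x̄)_{y*} > Ê^N(x̄)_c for every c ≠ y*; i.e., the empirical posterior predictor classifies every point of the ℓ∞ ε-ball around x* as y*, so x* has no adversarial examples within radius ε. -/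
theorem softmax_mono_aux {C : ℕ} (y : Fin C) (z z' : Fin C → ℝ) (hy : z y ≤ z' y)
    (hj : ∀ j, j ≠ y → z' j ≤ z j) : softmax y z ≤ softmax y z' := by
  have pos : ∀ v : Fin C → ℝ, 0 < ∑ j, Real.exp (v j) := fun v =>
    Finset.sum_pos (fun j _ => Real.exp_pos _) ⟨y, Finset.mem_univ y⟩
  unfold softmax
  rw [div_le_div_iff₀ (pos z) (pos z'), Finset.mul_sum, Finset.mul_sum]
  refine Finset.sum_le_sum fun j _ => ?_
  by_cases h : j = y
  · subst h
    exact le_of_eq (mul_comm _ _)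
  · exact mul_le_mul (Real.exp_le_exp.2 hy) (Real.exp_le_exp.2 (hj j h))
      (Real.exp_pos _).le (Real.exp_pos _).le

theorem affine_ibp_aux {m p : ℕ} (A : Matrix (Fin m) (Fin p) ℝ) (b : Fin m → ℝ)
    (v L U : Fin p → ℝ) (hv : ∀ i, L i ≤ v i ∧ v i ≤ U i) (i : Fin m) :
    |(A.mulVec v + b) i - (A.mulVec (fun i => (U i + L i) / 2) + b) i|
      ≤ (Matrix.of fun i j => |A i j|).mulVec (fun i => (U i - L i) / 2) i := by
  simp only [Matrix.mulVec, dotProduct, Pi.add_apply, Matrix.of_apply, add_sub_add_right_eq_sub]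
  rw [← Finset.sum_sub_distrib]
  refine (Finset.abs_sum_le_sum_abs _ _).trans (Finset.sum_le_sum fun j _ => ?_)
  rw [← mul_sub, abs_mul]
  refine mul_le_mul_of_nonneg_left ?_ (abs_nonneg _)
  rw [abs_le]
  constructor <;> linarith [(hv j).1, (hv j).2]

theorem phi_ibp_aux (n : ℕ → ℕ)
    (W : ∀ k : ℕ, Matrix (Fin (n (k + 1))) (Fin (n k)) ℝ)
    (b : ∀ k : ℕ, Fin (n (k + 1)) → ℝ) (h : ℝ → ℝ) (hmono : Monotone h)
    (x xb : Fin (n 0) → ℝ) (ε : ℝ) (hx : ‖x - xb‖ ≤ ε) (k : ℕ) :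
    ∀ i, (ibpPhi n W b h x ε k).1 i ≤ netPhi n W b h xb k i ∧
      netPhi n W b h xb k i ≤ (ibpPhi n W b h x ε k).2 i := by
  induction k with
  | zero =>
    intro i
    have := (norm_le_pi_norm (x - xb) i).trans hx
    rw [Real.norm_eq_abs, abs_le, Pi.sub_apply] at this
    simp only [ibpPhi, netPhi]
    constructor <;> linarith [this.1, this.2]
  | succ k ih =>
    intro i
    have := abs_le.1 (affine_ibp_aux (W k) (b k) _ _ _ ih i)
    simp only [ibpPhi, netPhi]
    exact ⟨hmono (by linarith [this.1]), hmono (by linarith [this.2])⟩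

theorem pre_ibp_aux (n : ℕ → ℕ)
    (W : ∀ k : ℕ, Matrix (Fin (n (k + 1))) (Fin (n k)) ℝ)
    (b : ∀ k : ℕ, Fin (n (k + 1)) → ℝ) (h : ℝ → ℝ) (hmono : Monotone h)
    (x xb : Fin (n 0) → ℝ) (ε : ℝ) (hx : ‖x - xb‖ ≤ ε) (k : ℕ) (i) :
    (ibpPre n W b h x ε k).1 i ≤ netPre n W b h xb k i ∧
      netPre n W b h xb k i ≤ (ibpPre n W b h x ε k).2 i := by
  have := abs_le.1 (affine_ibp_aux (W k) (b k) _ _ _ (phi_ibp_aux n W b h hmono x xb ε hx k) i)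
  simp only [ibpPre, netPre]
  exact ⟨by linarith [this.1], by linarith [this.2]⟩

/-- Theorem 1, pointwise certification: if
`Ê^{N,ε}_{y*,LB} > Ê^{N,ε}_{c,UB}` for every class `c ≠ y*`, then for every `x̄` with
`‖x* − x̄‖_∞ ≤ ε` the empirical posterior predictor satisfies
`Ê^N(x̄)_{y*} > Ê^N(x̄)_c` for every `c ≠ y*`; i.e. the whole `ℓ∞` ε-ball around `x*`
is classified as `y*`, so `x*` has no adversarial examples within radius `ε`. -/
theorem ensemble_pointwise_certification (n : ℕ → ℕ) (N K : ℕ) (hK : 1 ≤ K)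
    (Ws : Fin N → ∀ k : ℕ, Matrix (Fin (n (k + 1))) (Fin (n k)) ℝ)
    (bs : Fin N → ∀ k : ℕ, Fin (n (k + 1)) → ℝ) (h : ℝ → ℝ) (hmono : Monotone h)
    (xstar : Fin (n 0) → ℝ) (ystar : Fin (n (K - 1 + 1))) (ε : ℝ) (hε : 0 ≤ ε)
    (hsep : ∀ c : Fin (n (K - 1 + 1)), c ≠ ystar →
      ensembleUB n N K Ws bs h xstar c ε < ensembleLB n N K Ws bs h xstar ystar ε) :
    ∀ xbar : Fin (n 0) → ℝ, ‖xstar - xbar‖ ≤ ε →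
      ∀ c : Fin (n (K - 1 + 1)), c ≠ ystar →
        ensemblePred n N K Ws bs h xbar c < ensemblePred n N K Ws bs h xbar ystar := by
  intro xbar hx c hc
  have key := fun i => pre_ibp_aux n (Ws i) (bs i) h hmono xstar xbar ε hx (K - 1)
  have hN : (0 : ℝ) ≤ 1 / (N : ℝ) := by positivity
  have h1 : ensemblePred n N K Ws bs h xbar c ≤ ensembleUB n N K Ws bs h xstar c ε := by
    refine mul_le_mul_of_nonneg_left (Finset.sum_le_sum fun i _ => ?_) hN
    refine softmax_mono_aux _ _ _ ?_ fun j hj => ?_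
    · simpa [cornerUB] using (key i c).2
    · simpa [cornerUB, hj] using (key i j).1
  have h2 : ensembleLB n N K Ws bs h xstar ystar ε ≤ ensemblePred n N K Ws bs h xbar ystar := by
    refine mul_le_mul_of_nonneg_left (Finset.sum_le_sum fun i _ => ?_) hN
    refine softmax_mono_aux _ _ _ ?_ fun j hj => ?_
    · simpa [cornerLB] using (key i ystar).1
    · simpa [cornerLB, hj] using (key i j).2
  exact h1.trans_lt ((hsep c hc).trans_le h2)
end
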